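/- arXiv:1507.06132 — 3 statements merged into one kernel-verified Lean document; each statement's English description precedes it below -/
import Mathlib

section
/- Let P ⊂ ℝ^n be a compact polytope with nonempty interior given by a non-redundant description with pairwise distinct primitive normal vectors v_1, …, v_m ∈ ℤ^n spanning ℝ^n, and let u be a point of the interior of P. If the generalized leading term equation at u admits a solution, then u belongs to Trop(P, w) for every nonzero lattice vector w ∈ ℤ^n. -/
open scoped Classical

noncomputable section

/-- Integer inner product `⟨w, v⟩ = ∑ i, w i * v i` on `ℤ^n`. -/
def zdot {n : ℕ} (w v : Fin n → ℤ) : ℤ := ∑ i, w i * v i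

/-- A lattice vector is primitive if the gcd of its entries is `1`. -/
def Primitive {n : ℕ} (w : Fin n → ℤ) : Prop := Finset.univ.gcd w = 1

/-- The affine function `l_j(u) = ⟨u, v_j⟩ - λ_j`. -/
def lf {n m : ℕ} (v : Fin m → Fin n → ℤ) (lam : Fin m → ℝ) (j : Fin m) (u : Fin n → ℝ) : ℝ :=
  (∑ i, u i * (v j i : ℝ)) - lam j

/-- The polytope `P = {u : l_j(u) ≥ 0 for all j}`. -/
def Pset {n m : ℕ} (v : Fin m → Fin n → ℤ) (lam : Fin m → ℝ) : Set (Fin n → ℝ) :=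
  {u | ∀ j, 0 ≤ lf v lam j u}

/-- The tropicalization of `P` relative to the lattice vector `w`: the set of points at which
the minimum of `{l_j(u) : ⟨w, v_j⟩ ≠ 0}` is attained by at least two distinct indices. -/
def TropRel {n m : ℕ} (v : Fin m → Fin n → ℤ) (lam : Fin m → ℝ) (w : Fin n → ℤ) :
    Set (Fin n → ℝ) :=
  {u | ∃ j₁ j₂ : Fin m, j₁ ≠ j₂ ∧ zdot w (v j₁) ≠ 0 ∧ zdot w (v j₂) ≠ 0 ∧
        lf v lam j₁ u = lf v lam j₂ u ∧
        ∀ j : Fin m, zdot w (v j) ≠ 0 → lf v lam j₁ u ≤ lf v lam j u}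

/-- The generalized leading term equation at `u` admits a solution: there are nonzero complex
numbers `c_j` and nonzero `y_i` such that for every `j₀` and every lattice vector `w` with
`⟨w, v_j⟩ = 0` for all `j` with `l_j(u) < l_{j₀}(u)`, one has
`∑_{j : l_j(u) = l_{j₀}(u)} c_j ⟨w, v_j⟩ y^{v_j} = 0`. -/
def GLTESolvable {n m : ℕ} (v : Fin m → Fin n → ℤ) (lam : Fin m → ℝ) (u : Fin n → ℝ) : Prop :=
  ∃ (c : Fin m → ℂ) (y : Fin n → ℂ), (∀ j, c j ≠ 0) ∧ (∀ i, y i ≠ 0) ∧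
    ∀ (j₀ : Fin m) (w : Fin n → ℤ),
      (∀ j : Fin m, lf v lam j u < lf v lam j₀ u → zdot w (v j) = 0) →
      (∑ j ∈ Finset.univ.filter (fun j => lf v lam j u = lf v lam j₀ u),
          c j * (zdot w (v j) : ℂ) * ∏ i, y i ^ (v j i)) = 0

theorem eq_zero_of_forall_dotProduct_eq_zero_of_span_eq_top {ι κ R : Type*} [Fintype κ]
    [CommSemiring R] {v : ι → κ → R} (hspan : Submodule.span R (Set.range v) = ⊤) {w : κ → R}
    (hw : ∀ j, w ⬝ᵥ v j = 0) : w = 0 := by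
  have dotProduct_w_eq_zero : dotProductBilin R R w = 0 := LinearMap.ext_on_range hspan hw
  exact dotProduct_eq_zero w fun x => LinearMap.congr_fun dotProduct_w_eq_zero x

theorem intCast_zdot {n : ℕ} (R : Type*) [NonAssocRing R] (w v : Fin n → ℤ) :
    (zdot w v : R) = (fun i => (w i : R)) ⬝ᵥ fun i => (v i : R) := by
  simp only [zdot, dotProduct, Int.cast_sum, Int.cast_mul]

theorem exists_zdot_ne_zero_of_span_eq_top {n : ℕ} {ι R : Type*} [CommRing R] [CharZero R]
    {v : ι → Fin n → ℤ} (hspan : Submodule.span R (Set.range fun j i => (v j i : R)) = ⊤)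
    {w : Fin n → ℤ} (hw : w ≠ 0) : ∃ j, zdot w (v j) ≠ 0 := by
  by_contra! hzero
  have cast_w_eq_zero : (fun i => (w i : R)) = 0 :=
    eq_zero_of_forall_dotProduct_eq_zero_of_span_eq_top hspan fun j => by
      rw [← intCast_zdot, hzero j, Int.cast_zero]
  exact hw (funext fun i => Int.cast_eq_zero.mp (congrFun cast_w_eq_zero i))

theorem exists_mem_ne_of_sum_eq_zero {ι M : Type*} [AddCommMonoid M] {s : Finset ι} {f : ι → M}
    (hsum : ∑ j ∈ s, f j = 0) {a : ι} (ha : a ∈ s) (hfa : f a ≠ 0) :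
    ∃ b ∈ s, b ≠ a ∧ f b ≠ 0 := by
  by_contra! hzero
  exact hfa ((Finset.sum_eq_single_of_mem a ha hzero).symm.trans hsum)

section LeadingTerms

variable {n m : ℕ} {v : Fin m → Fin n → ℤ} {lam : Fin m → ℝ} {u : Fin n → ℝ}

/- Minimality makes `w` admissible in the equation at the level of `j₀`, and a vanishing sum cannot
have the term of `j₀` as its only nonzero term. -/
theorem GLTESolvable.exists_ne_lf_eq (hglte : GLTESolvable v lam u) {w : Fin n → ℤ} {j₀ : Fin m}
    (hj₀ : zdot w (v j₀) ≠ 0)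
    (hmin : ∀ j, zdot w (v j) ≠ 0 → lf v lam j₀ u ≤ lf v lam j u) :
    ∃ j, j ≠ j₀ ∧ zdot w (v j) ≠ 0 ∧ lf v lam j u = lf v lam j₀ u := by
  obtain ⟨c, y, hc, hy, hsol⟩ := hglte
  have leading_sum_eq_zero := hsol j₀ w fun j hlt =>
    of_not_not fun hj => (hmin j hj).not_gt hlt
  have leading_term_ne_zero : c j₀ * (zdot w (v j₀) : ℂ) * ∏ i, y i ^ v j₀ i ≠ 0 :=
    mul_ne_zero (mul_ne_zero (hc j₀) (Int.cast_ne_zero.mpr hj₀))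
      (Finset.prod_ne_zero_iff.mpr fun i _ => zpow_ne_zero _ (hy i))
  obtain ⟨j, hj_level, hj_ne, hj_term⟩ :=
    exists_mem_ne_of_sum_eq_zero leading_sum_eq_zero (by simp) leading_term_ne_zero
  have zdot_ne_zero : zdot w (v j) ≠ 0 :=
    Int.cast_ne_zero.mp (right_ne_zero_of_mul (left_ne_zero_of_mul hj_term))
  exact ⟨j, hj_ne, zdot_ne_zero, (Finset.mem_filter.mp hj_level).2⟩

theorem statement2_general (hglte : GLTESolvable v lam u) {w : Fin n → ℤ}
    (hw : ∃ j, zdot w (v j) ≠ 0) : u ∈ TropRel v lam w := by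
  obtain ⟨j₁, hj₁, hmin⟩ := Set.exists_min_image {j | zdot w (v j) ≠ 0} (fun j => lf v lam j u)
    (Set.toFinite _) hw
  obtain ⟨j₂, hne, hj₂, heq⟩ := hglte.exists_ne_lf_eq hj₁ hmin
  exact ⟨j₁, j₂, hne.symm, hj₁, hj₂, heq.symm, hmin⟩

end LeadingTerms

/-- For a compact polytope `P ⊂ ℝ^n` with nonempty interior, given by a
non-redundant description with pairwise distinct primitive normal vectors spanning `ℝ^n`, and a
point `u` of the interior of `P`: if the generalized leading term equation at `u` admits a
solution, then `u ∈ Trop(P, w)` for every nonzero lattice vector `w`. -/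
theorem statement2 {n m : ℕ} (hn : 1 ≤ n) (hm : 1 ≤ m)
    (v : Fin m → Fin n → ℤ) (lam : Fin m → ℝ)
    (hdist : Function.Injective v)
    (hprim : ∀ j, Primitive (v j))
    (hspan : Submodule.span ℝ (Set.range fun j => fun i => ((v j i : ℝ)))
      = (⊤ : Submodule ℝ (Fin n → ℝ)))
    (hcpt : IsCompact (Pset v lam))
    (hint : (interior (Pset v lam)).Nonempty)
    (hnr : ∀ j, ∃ p ∈ Pset v lam, lf v lam j p = 0 ∧ ∀ k, k ≠ j → 0 < lf v lam k p)
    (u : Fin n → ℝ) (hu : u ∈ interior (Pset v lam))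
    (hglte : GLTESolvable v lam u) :
    ∀ w : Fin n → ℤ, w ≠ 0 → u ∈ TropRel v lam w :=
  fun _ hw => statement2_general hglte (exists_zdot_ne_zero_of_span_eq_top hspan hw)
end
end

section
/- Let v_1, …, v_m ∈ ℤ^n be pairwise distinct primitive vectors spanning ℝ^n and λ_1, …, λ_m ∈ ℝ, with l_j(u) = ⟨u, v_j⟩ − λ_j. Let u ∈ ℝ^n and let w ∈ ℤ^n be such that J_w = {j : ⟨w, v_j⟩ ≠ 0} is nonempty and the minimum of {l_j(u) : j ∈ J_w} is attained by exactly one index in J_w (i.e., u ∉ Trop(P, w)). Then there exists a primitive lattice vector w̃ ∈ ℤ^n that is orthogonal to some (n−1)-dimensional linear subspace of ℝ^n spanned by a subset of {v_1, …, v_m}, such that J_{w̃} is nonempty and the minimum of {l_j(u) : j ∈ J_{w̃}} is attained by exactly one index in J_{w̃} (i.e., u ∉ Trop(P, w̃)). -/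
open scoped Classical

noncomputable section

/-- A primary subspace for `P`: an `(n-1)`-dimensional subspace of `ℝ^n` spanned by a subset
of the facet normal vectors `v_j`. -/
def IsPrimary {n m : ℕ} (v : Fin m → Fin n → ℤ) (V : Submodule ℝ (Fin n → ℝ)) : Prop :=
  Module.finrank ℝ ↥V = n - 1 ∧
  ∃ S : Set (Fin m), V = Submodule.span ℝ ((fun j => fun i => ((v j i : ℝ))) '' S)

/-- `w` is orthogonal to some primary subspace for `P`. -/
def OrthToPrimary {n m : ℕ} (v : Fin m → Fin n → ℤ) (w : Fin n → ℤ) : Prop :=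
  ∃ V : Submodule ℝ (Fin n → ℝ), IsPrimary v V ∧ ∀ x ∈ V, (∑ i, (w i : ℝ) * x i) = 0

/-!
Among the index sets `S` containing `{j | ⟨w, v j⟩ = 0}` for which `v j₀` is not in the span of
`{v j | j ∈ S}`, take a maximal one. By the exchange property its span `V` is a hyperplane. A
fortiori `v j₀` is not in the rational span of `{v j | j ∈ S}`, so some `ℚ`-linear functional
vanishes on these vectors but not at `v j₀`; clearing denominators and dividing by the gcd turns it
into a primitive vector `w̃` orthogonal to `V`. Then `j₀ ∈ J_w̃ ⊆ J_w`, so a unique minimum over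
`J_w` at `j₀` is one over `J_w̃` as well.
-/

open Module Submodule

section Hyperplane

variable {K E ι : Type*} [DivisionRing K] [AddCommGroup E] [Module K E]

lemma exists_isCoatom_span_image_of_notMem_span [Finite ι] {f : ι → E}
    (hf : span K (Set.range f) = ⊤) {x : E} {A : Set ι} (hx : x ∉ span K (f '' A)) :
    ∃ S, A ⊆ S ∧ x ∉ span K (f '' S) ∧ IsCoatom (span K (f '' S)) := by
  obtain ⟨S, hAS, hS⟩ := Finite.exists_le_maximal (p := fun S ↦ x ∉ span K (f '' S)) hx
  refine ⟨S, hAS, hS.prop, ?_⟩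
  have apply_mem_span_insert (j : ι) : f j ∈ span K (insert x (f '' S)) := by
    by_cases hj : j ∈ S
    · exact subset_span (.inr ⟨j, hj, rfl⟩)
    · have hx_insert : x ∈ span K (insert (f j) (f '' S)) := by
        rw [← Set.image_insert_eq]
        exact not_not.1 (hS.not_prop_of_gt (Set.ssubset_insert hj))
      exact mem_span_insert_exchange hx_insert hS.prop
  have sup_eq_top : span K {x} ⊔ span K (f '' S) = ⊤ := by
    rw [← span_insert, eq_top_iff, ← hf, span_le]
    exact Set.range_subset_iff.2 apply_mem_span_insert
  rw [← covBy_top_iff, ← sup_eq_top]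
  exact covBy_span_singleton_sup hS.prop

lemma finrank_add_one_of_isCoatom [FiniteDimensional K E] {V : Submodule K E} (hV : IsCoatom V) :
    finrank K V + 1 = finrank K E := by
  have finrank_quotient : finrank K (E ⧸ V) = 1 :=
    isSimpleModule_iff_finrank_eq_one.1 (isSimpleModule_iff_isCoatom.2 hV)
  rw [← V.finrank_quotient_add_finrank, finrank_quotient, add_comm]

end Hyperplane

section Lattice

variable {n : ℕ}

lemma exists_primitive_eq_mul {c : Fin n → ℚ} (hc : c ≠ 0) :
    ∃ (a : ℚ) (g : Fin n → ℤ), a ≠ 0 ∧ Primitive g ∧ ∀ i, c i = a * g i := by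
  obtain ⟨i₀, hi₀⟩ := Function.ne_iff.1 hc
  obtain ⟨b, hb⟩ := IsLocalization.exist_integer_multiples_of_finite (nonZeroDivisors ℤ) c
  choose z hz using hb
  obtain ⟨g, hg, hg_gcd⟩ := Finset.extract_gcd z ⟨i₀, Finset.mem_univ i₀⟩
  have hb₀ : ((b : ℤ) : ℚ) ≠ 0 := Int.cast_ne_zero.2 (nonZeroDivisors.coe_ne_zero b)
  have hcg (i : Fin n) : c i = (Finset.univ.gcd z / (b : ℤ) : ℚ) * g i := by
    have clear_denom : (z i : ℚ) = (b : ℤ) * c i := by simpa using hz i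
    have extract : (z i : ℚ) = Finset.univ.gcd z * g i := by
      exact_mod_cast hg i (Finset.mem_univ i)
    field_simp
    rw [mul_comm, ← clear_denom, extract]
  refine ⟨_, g, fun ha ↦ hi₀ ?_, hg_gcd, hcg⟩
  rw [hcg, ha, zero_mul, Pi.zero_apply]

lemma exists_primitive_eq_mul_zdot {φ : (Fin n → ℤ) →+ ℚ} (hφ : φ ≠ 0) :
    ∃ (a : ℚ) (g : Fin n → ℤ), a ≠ 0 ∧ Primitive g ∧ ∀ x, φ x = a * zdot g x := by
  have apply_eq_sum (x : Fin n → ℤ) : φ x = ∑ i, x i * φ (Pi.single i 1) := by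
    conv_lhs => rw [pi_eq_sum_univ' x, map_sum]
    exact Finset.sum_congr rfl fun i _ ↦ by rw [map_zsmul, zsmul_eq_mul]
  have coeff_ne_zero : (fun i ↦ φ (Pi.single i 1)) ≠ 0 := fun h ↦ hφ <| by
    ext i
    simpa using congrFun h i
  obtain ⟨a, g, ha, hg, hφg⟩ := exists_primitive_eq_mul coeff_ne_zero
  refine ⟨a, g, ha, hg, fun x ↦ ?_⟩
  rw [apply_eq_sum, zdot, Int.cast_sum, Finset.mul_sum]
  refine Finset.sum_congr rfl fun i _ ↦ ?_
  rw [hφg, Int.cast_mul, mul_left_comm, mul_comm (g i : ℚ)]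

lemma exists_primitive_zdot_eq_zero_of_notMem_span {E : Type*} [AddCommGroup E] [Module ℚ E]
    (φ : (Fin n → ℤ) →+ E) {s : Set (Fin n → ℤ)} {x : Fin n → ℤ} (hx : φ x ∉ span ℚ (φ '' s)) :
    ∃ g, Primitive g ∧ (∀ y ∈ s, zdot g y = 0) ∧ zdot g x ≠ 0 := by
  obtain ⟨f, hfx, hfs⟩ := exists_le_ker_of_notMem hx
  have hfφ : f.toAddMonoidHom.comp φ ≠ 0 := fun h ↦ hfx (DFunLike.congr_fun h x)
  obtain ⟨a, g, ha, hg, hfg⟩ := exists_primitive_eq_mul_zdot hfφ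
  have apply_eq_zero_iff (y : Fin n → ℤ) : f (φ y) = 0 ↔ zdot g y = 0 := by
    rw [show f (φ y) = a * zdot g y from hfg y, mul_eq_zero_iff_left ha, Int.cast_eq_zero]
  exact ⟨g, hg, fun y hy ↦ (apply_eq_zero_iff y).1 (hfs (subset_span ⟨y, hy, rfl⟩)),
    fun h ↦ hfx ((apply_eq_zero_iff x).2 h)⟩

lemma sum_mul_eq_zero_of_mem_span {K ι : Type*} [CommRing K] {v : ι → Fin n → ℤ} {w : Fin n → ℤ}
    {S : Set ι} (hw : ∀ j ∈ S, zdot w (v j) = 0) {x : Fin n → K}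
    (hx : x ∈ span K ((fun j i ↦ (v j i : K)) '' S)) : ∑ i, (w i : K) * x i = 0 := by
  have span_le_ker : span K ((fun j i ↦ (v j i : K)) '' S) ≤
      LinearMap.ker (dotProductBilin K K fun i ↦ (w i : K)) := by
    rw [span_le]
    rintro _ ⟨j, hj, rfl⟩
    simpa [zdot, dotProduct] using congrArg (Int.cast : ℤ → K) (hw j hj)
  exact span_le_ker hx

end Lattice

theorem statement3_general {n m : ℕ} (v : Fin m → Fin n → ℤ)
    (hspan : span ℝ (Set.range fun j ↦ fun i ↦ (v j i : ℝ)) = ⊤)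
    (w : Fin n → ℤ) (j₀ : Fin m) (hj₀ : zdot w (v j₀) ≠ 0) :
    ∃ wt : Fin n → ℤ, Primitive wt ∧ OrthToPrimary v wt ∧ zdot wt (v j₀) ≠ 0 ∧
      ∀ j, zdot wt (v j) ≠ 0 → zdot w (v j) ≠ 0 := by
  have notMem_span : (fun i ↦ (v j₀ i : ℝ)) ∉
      span ℝ ((fun j i ↦ (v j i : ℝ)) '' {j | zdot w (v j) = 0}) := fun h ↦
    hj₀ (by exact_mod_cast sum_mul_eq_zero_of_mem_span (fun _ hj ↦ hj) h)
  obtain ⟨S, hwS, hj₀S, hS⟩ := exists_isCoatom_span_image_of_notMem_span hspan notMem_span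
  have notMem_span_rat : (fun i ↦ (v j₀ i : ℝ)) ∉ span ℚ ((fun j i ↦ (v j i : ℝ)) '' S) :=
    fun h ↦ hj₀S (span_le_restrictScalars ℚ ℝ _ h)
  obtain ⟨wt, hwt, hwtS, hwtj₀⟩ := exists_primitive_zdot_eq_zero_of_notMem_span
    ((Int.castAddHom ℝ).compLeft (Fin n)) (s := v '' S) (x := v j₀)
    (by rw [Set.image_image]; exact notMem_span_rat)
  rw [Set.forall_mem_image] at hwtS
  have hfinrank := finrank_add_one_of_isCoatom hS
  rw [finrank_fin_fun] at hfinrank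
  exact ⟨wt, hwt, ⟨_, ⟨Nat.eq_sub_of_add_eq hfinrank, S, rfl⟩,
    fun _ ↦ sum_mul_eq_zero_of_mem_span hwtS⟩, hwtj₀, fun j hj hwj ↦ hj (hwtS (hwS hwj))⟩

/-- If `u ∉ Trop(P, w)` for some lattice vector `w` with `J_w ≠ ∅` (i.e. the
minimum of `{l_j(u) : j ∈ J_w}` is attained by exactly one index), then there is a primitive
lattice vector `w̃` orthogonal to an `(n-1)`-dimensional subspace spanned by facet normal
vectors such that `J_{w̃} ≠ ∅` and `u ∉ Trop(P, w̃)`. -/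
theorem statement3 {n m : ℕ} (hn : 1 ≤ n) (hm : 1 ≤ m)
    (v : Fin m → Fin n → ℤ) (lam : Fin m → ℝ)
    (hdist : Function.Injective v)
    (hprim : ∀ j, Primitive (v j))
    (hspan : Submodule.span ℝ (Set.range fun j => fun i => ((v j i : ℝ)))
      = (⊤ : Submodule ℝ (Fin n → ℝ)))
    (u : Fin n → ℝ) (w : Fin n → ℤ)
    (j₀ : Fin m) (hj₀ : zdot w (v j₀) ≠ 0)
    (hmin : ∀ j, zdot w (v j) ≠ 0 → lf v lam j₀ u ≤ lf v lam j u)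
    (huniq : ∀ j, zdot w (v j) ≠ 0 → lf v lam j u = lf v lam j₀ u → j = j₀) :
    ∃ wt : Fin n → ℤ, Primitive wt ∧ OrthToPrimary v wt ∧
      ∃ k₀ : Fin m, zdot wt (v k₀) ≠ 0 ∧
        (∀ j, zdot wt (v j) ≠ 0 → lf v lam k₀ u ≤ lf v lam j u) ∧
        ∀ j, zdot wt (v j) ≠ 0 → lf v lam j u = lf v lam k₀ u → j = k₀ := by
  obtain ⟨wt, hwt, horth, hwtj₀, hsub⟩ := statement3_general v hspan w j₀ hj₀
  exact ⟨wt, hwt, horth, j₀, hwtj₀, fun j hj ↦ hmin j (hsub j hj), fun j hj ↦ huniq j (hsub j hj)⟩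
end
end

section
/- Let v_1, …, v_s ∈ ℤ^n (s ≥ 2) be pairwise distinct primitive vectors, λ_1, …, λ_s ∈ ℝ, and l_j(u) = ⟨u, v_j⟩ − λ_j. Let (δ^{(i)})_{i∈ℕ} be a monotonically decreasing sequence of positive real numbers converging to 0. Let T = {u ∈ ℝ^n : the minimum of {l_1(u), …, l_s(u)} is attained by at least two distinct indices} and T^{(i)} = {u ∈ ℝ^n : the minimum of {l_1(u) + δ^{(i)}, l_2(u), …, l_s(u)} is attained by at least two distinct indices}. Then for every ε > 0 there exists ν ∈ ℕ, independent of the points, such that for all i ≥ ν and every u_2 ∈ T^{(i)} there exists u_1 ∈ T with ‖u_1 − u_2‖ < ε. -/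
open scoped Classical

noncomputable section

/-- The affine function `l_j(u) = ⟨u, v_j⟩ - λ_j` on Euclidean space. -/
def lfE {n m : ℕ} (v : Fin m → Fin n → ℤ) (lam : Fin m → ℝ) (j : Fin m)
    (u : EuclideanSpace ℝ (Fin n)) : ℝ :=
  (∑ i, u i * (v j i : ℝ)) - lam j

/-- The tropicalization of the family `{l_1, …, l_s}`: the set of points at which the pointwise
minimum of the family is attained by at least two distinct indices. -/
def TropAll {n s : ℕ} (v : Fin s → Fin n → ℤ) (lam : Fin s → ℝ) :
    Set (EuclideanSpace ℝ (Fin n)) :=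
  {u | ∃ j₁ j₂ : Fin s, j₁ ≠ j₂ ∧ lfE v lam j₁ u = lfE v lam j₂ u ∧
        ∀ j : Fin s, lfE v lam j₁ u ≤ lfE v lam j u}

/-!
At a point `u` of the perturbed tropicalization let `l_z` be a smallest unperturbed function. One
of the two perturbed minimizers is some `l_j` with `j ≠ z`, and `l_j(u) - l_z(u)` is bounded by the
size of the perturbation. Choose `w` along which `l_z - l_j` grows with slope one: moving from `u`
in the direction `w` for time `l_j(u) - l_z(u)`, one starts in the region where `l_z` is minimal
and ends where `l_j ≤ l_z`, so by connectedness one crosses the tropicalization on the way. Only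
finitely many directions `w` occur, hence the distance travelled is small uniformly in `u`.
-/

open Filter Metric Topology

section MinRegion

variable {ι X α : Type*}

/-- The set of points at which the member `f j` attains the pointwise minimum of the family `f`;
for affine families, a region of linearity of that minimum. -/
def minRegion [LE α] (f : ι → X → α) (j : ι) : Set X :=
  {x | ∀ k, f j x ≤ f k x}

/-- The tropicalization of an arbitrary family of functions, as the union of the pairwise
intersections of the regions `minRegion f j`. Members are told apart by their indices. -/
def tropicalization [LE α] (f : ι → X → α) : Set X :=
  {x | ∃ j₁ j₂, j₁ ≠ j₂ ∧ x ∈ minRegion f j₁ ∧ x ∈ minRegion f j₂}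

theorem exists_mem_minRegion [Finite ι] [Nonempty ι] [LinearOrder α] (f : ι → X → α) (x : X) :
    ∃ j, x ∈ minRegion f j :=
  Finite.exists_min fun j => f j x

theorem exists_ne_mem_minRegion_of_mem_tropicalization [LE α] {f : ι → X → α} {x : X}
    (hx : x ∈ tropicalization f) (z : ι) : ∃ j, j ≠ z ∧ x ∈ minRegion f j := by
  obtain ⟨j₁, j₂, hne, h₁, h₂⟩ := hx
  by_cases hz : j₁ = z
  · exact ⟨j₂, hz ▸ hne.symm, h₂⟩
  · exact ⟨j₁, hz, h₁⟩

theorem exists_ne_mem_minRegion_of_le [Finite ι] [LinearOrder α] {f : ι → X → α} {x : X}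
    {j z : ι} (hjz : j ≠ z) (hle : f j x ≤ f z x) : ∃ k, k ≠ z ∧ x ∈ minRegion f k := by
  have : Nonempty ι := ⟨j⟩
  obtain ⟨k, hk⟩ := exists_mem_minRegion f x
  by_cases hkz : k = z
  · exact ⟨j, hjz, fun m => hle.trans (hkz ▸ hk m)⟩
  · exact ⟨k, hkz, hk⟩

variable [TopologicalSpace X] [TopologicalSpace α] [LinearOrder α] [OrderClosedTopology α]
  {f : ι → X → α}

theorem isClosed_minRegion (hf : ∀ k, Continuous (f k)) (j : ι) : IsClosed (minRegion f j) := by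
  simp only [minRegion, Set.ofPred_forall]
  exact isClosed_iInter fun k => isClosed_le (hf j) (hf k)

theorem inter_tropicalization_nonempty_of_isPreconnected [Finite ι]
    (hf : ∀ k, Continuous (f k)) {S : Set X} (hS : IsPreconnected S) {x y : X} (hx : x ∈ S)
    (hy : y ∈ S) {j z : ι} (hjz : j ≠ z) (hxz : x ∈ minRegion f z) (hyj : f j y ≤ f z y) :
    (S ∩ tropicalization f).Nonempty := by
  have : Nonempty ι := ⟨j⟩
  let others : Set X := ⋃ k : {k // k ≠ z}, minRegion f k
  have mem_others {p : X} {k : ι} (hkz : k ≠ z) (hk : p ∈ minRegion f k) : p ∈ others :=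
    Set.mem_iUnion.mpr ⟨⟨k, hkz⟩, hk⟩
  have others_closed : IsClosed others :=
    isClosed_iUnion_of_finite fun k => isClosed_minRegion hf k
  have cover : S ⊆ minRegion f z ∪ others := fun p _ => by
    obtain ⟨k, hk⟩ := exists_mem_minRegion f p
    by_cases hkz : k = z
    · exact .inl (hkz ▸ hk)
    · exact .inr (mem_others hkz hk)
  have hy_others : y ∈ others := by
    obtain ⟨k, hkz, hk⟩ := exists_ne_mem_minRegion_of_le hjz hyj
    exact mem_others hkz hk
  obtain ⟨p, hpS, hpz, hp⟩ := isPreconnected_closed_iff.mp hS _ _ (isClosed_minRegion hf z)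
    others_closed cover ⟨x, hx, hxz⟩ ⟨y, hy, hy_others⟩
  obtain ⟨⟨k, hkz⟩, hk⟩ := Set.mem_iUnion.mp hp
  exact ⟨p, hpS, k, z, hkz, hk, hpz⟩

end MinRegion

section AffineFamily

variable {ι E : Type*}

/-- The family of affine functions `u ↦ φ j u - c j` with linear parts `φ` and constants `c`.
The linear functionals need not be continuous. -/
def affineFamily [AddCommGroup E] [Module ℝ E] (φ : ι → Module.Dual ℝ E) (c : ι → ℝ) (j : ι)
    (u : E) : ℝ :=
  φ j u - c j

theorem affineFamily_add_smul [AddCommGroup E] [Module ℝ E] (φ : ι → Module.Dual ℝ E)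
    (c : ι → ℝ) (j : ι) (u w : E) (t : ℝ) :
    affineFamily φ c j (u + t • w) = affineFamily φ c j u + t * φ j w := by
  simp only [affineFamily, map_add, map_smul, smul_eq_mul]
  ring

theorem exists_sub_apply_eq_one [AddCommGroup E] [Module ℝ E] {φ ψ : Module.Dual ℝ E}
    (h : φ ≠ ψ) : ∃ w, φ w - ψ w = 1 :=
  LinearMap.surjective_of_ne_zero (sub_ne_zero.mpr h) 1

theorem affineFamily_sub_le_of_mem_minRegion [AddCommGroup E] [Module ℝ E]
    {φ : ι → Module.Dual ℝ E} {c' : ι → ℝ} {u : E} {j : ι}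
    (hu : u ∈ minRegion (affineFamily φ c') j) (c : ι → ℝ) (z : ι) :
    affineFamily φ c j u - affineFamily φ c z u ≤ (c' j - c j) - (c' z - c z) := by
  have hjz : φ j u - c' j ≤ φ z u - c' z := hu z
  simp only [affineFamily]
  linarith

variable [Finite ι] [SeminormedAddCommGroup E] [NormedSpace ℝ E] {φ : ι → Module.Dual ℝ E}
  {c : ι → ℝ}

theorem exists_mem_tropicalization_dist_le {u w : E} {j z : ι} (hw : φ z w - φ j w = 1)
    (hu : u ∈ minRegion (affineFamily φ c) z) :
    ∃ u₁ ∈ tropicalization (affineFamily φ c),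
      dist u u₁ ≤ (affineFamily φ c j u - affineFamily φ c z u) * ‖w‖ := by
  set d := affineFamily φ c j u - affineFamily φ c z u with hd
  have d_nonneg : 0 ≤ d := sub_nonneg.mpr (hu j)
  have hjz : j ≠ z := by
    rintro rfl
    simp at hw
  let onLine : ι → ℝ → ℝ := fun k t => affineFamily φ c k (u + t • w)
  have onLine_continuous (k : ι) : Continuous (onLine k) := by
    simp only [onLine, affineFamily_add_smul]
    fun_prop
  have start_mem : (0 : ℝ) ∈ minRegion onLine z := fun k => by simpa [onLine] using hu k
  have end_eq : onLine j d = onLine z d := by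
    simp only [onLine, affineFamily_add_smul]
    linear_combination -d * hw - hd
  obtain ⟨t, ⟨ht₀, htd⟩, ht⟩ := inter_tropicalization_nonempty_of_isPreconnected
    onLine_continuous isPreconnected_Icc (Set.left_mem_Icc.mpr d_nonneg)
    (Set.right_mem_Icc.mpr d_nonneg) hjz start_mem end_eq.le
  refine ⟨u + t • w, ht, ?_⟩
  rw [dist_self_add_right, norm_smul, Real.norm_of_nonneg ht₀]
  gcongr

theorem statement9_general (hφ : Function.Injective φ) {ε : ℝ} (hε : 0 < ε) :
    ∀ᶠ c' in 𝓝 c, tropicalization (affineFamily φ c') ⊆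
      thickening ε (tropicalization (affineFamily φ c)) := by
  choose! w hw using fun z j (hjz : j ≠ z) => exists_sub_apply_eq_one (hφ.ne hjz.symm)
  have perturbation_small : ∀ᶠ c' in 𝓝 c, ∀ z j,
      ((c' j - c j) - (c' z - c z)) * ‖w z j‖ < ε := by
    refine eventually_all.mpr fun z => eventually_all.mpr fun j => ?_
    have cont : Continuous fun c' : ι → ℝ => ((c' j - c j) - (c' z - c z)) * ‖w z j‖ := by
      fun_prop
    exact cont.continuousAt.eventually_lt_const (by simpa using hε)
  filter_upwards [perturbation_small] with c' hc' u hu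
  have : Nonempty ι := ⟨hu.choose⟩
  obtain ⟨z, hz⟩ := exists_mem_minRegion (affineFamily φ c) u
  obtain ⟨j, hjz, hj⟩ := exists_ne_mem_minRegion_of_mem_tropicalization hu z
  obtain ⟨u₁, hu₁, hdist⟩ := exists_mem_tropicalization_dist_le (hw z j hjz) hz
  refine mem_thickening_iff.mpr ⟨u₁, hu₁, ?_⟩
  calc
    dist u u₁ ≤ (affineFamily φ c j u - affineFamily φ c z u) * ‖w z j‖ := hdist
    _ ≤ ((c' j - c j) - (c' z - c z)) * ‖w z j‖ := by
      exact mul_le_mul_of_nonneg_right (affineFamily_sub_le_of_mem_minRegion hj c z)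
        (norm_nonneg _)
    _ < ε := hc' z j

end AffineFamily

section Lattice

variable {n s : ℕ}

/-- The linear functional `⟨·, a⟩` on Euclidean space defined by a lattice vector `a`. -/
def latticeFunctional (a : Fin n → ℤ) : Module.Dual ℝ (EuclideanSpace ℝ (Fin n)) :=
  innerₗ _ (WithLp.toLp 2 fun i => (a i : ℝ))

theorem latticeFunctional_apply (a : Fin n → ℤ) (u : EuclideanSpace ℝ (Fin n)) :
    latticeFunctional a u = ∑ i, u i * (a i : ℝ) := by
  simp [latticeFunctional, PiLp.inner_apply]

theorem latticeFunctional_injective :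
    Function.Injective (latticeFunctional : (Fin n → ℤ) → _) := fun a b hab => by
  funext i
  simpa [latticeFunctional_apply] using LinearMap.congr_fun hab (EuclideanSpace.single i 1)

theorem tropAll_eq_tropicalization (v : Fin s → Fin n → ℤ) (lam : Fin s → ℝ) :
    TropAll v lam = tropicalization (affineFamily (latticeFunctional ∘ v) lam) := by
  have lfE_eq : lfE v lam = affineFamily (latticeFunctional ∘ v) lam := by
    funext j u
    simp only [lfE, affineFamily, Function.comp_apply, latticeFunctional_apply]
  ext u
  simp only [← lfE_eq, TropAll, tropicalization, minRegion, Set.mem_ofPred_eq]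
  refine exists₂_congr fun j₁ j₂ => and_congr_right fun _ => ?_
  exact ⟨fun ⟨heq, hmin⟩ => ⟨hmin, fun k => heq ▸ hmin k⟩,
    fun ⟨h₁, h₂⟩ => ⟨(h₁ j₂).antisymm (h₂ j₁), h₁⟩⟩

end Lattice

theorem tendsto_update_sub_of_tendsto_zero {ι κ : Type*} [DecidableEq ι] {F : Filter κ} {δ : κ → ℝ}
    (hδ : Tendsto δ F (𝓝 0)) (c : ι → ℝ) (z : ι) :
    Tendsto (fun i => Function.update c z (c z - δ i)) F (𝓝 c) := by
  have const_tendsto : Tendsto (fun _ : κ => c) F (𝓝 c) := tendsto_const_nhds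
  simpa using const_tendsto.update z (hδ.const_sub (c z))

/-- With `l_j(u) = ⟨u, v_j⟩ - λ_j` (`s ≥ 2`, pairwise distinct primitive
`v_j`) and `δ^{(i)}` a monotonically decreasing sequence of positive reals tending to `0`, let
`T` be the tropicalization of `{l_1, …, l_s}` and `T^{(i)}` that of
`{l_1 + δ^{(i)}, l_2, …, l_s}`. For every `ε > 0` there exists `ν`, independent of the points,
such that for all `i ≥ ν` and every `u₂ ∈ T^{(i)}` there is `u₁ ∈ T` with `‖u₁ - u₂‖ < ε`. -/
theorem statement9 {n s : ℕ} (hs : 2 ≤ s)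
    (v : Fin s → Fin n → ℤ) (lam : Fin s → ℝ)
    (hdist : Function.Injective v)
    (hprim : ∀ j, Primitive (v j))
    (δ : ℕ → ℝ) (hpos : ∀ i, 0 < δ i) (hmono : Antitone δ)
    (hδ : Filter.Tendsto δ Filter.atTop (nhds 0)) :
    ∀ ε > (0 : ℝ), ∃ ν : ℕ, ∀ i ≥ ν,
      ∀ u₂ ∈ TropAll v (Function.update lam ⟨0, by omega⟩ (lam ⟨0, by omega⟩ - δ i)),
        ∃ u₁ ∈ TropAll v lam, dist u₁ u₂ < ε := by
  intro ε hε
  have subset_thickening := (tendsto_update_sub_of_tendsto_zero hδ lam ⟨0, by omega⟩).eventually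
    (statement9_general (latticeFunctional_injective.comp hdist) hε)
  simpa only [← tropAll_eq_tropicalization, eventually_atTop, Set.subset_def, mem_thickening_iff,
    dist_comm] using subset_thickening
end
end
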